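/- arXiv:2311.02366 — 6 statements merged into one kernel-verified Lean document; each statement's English description precedes it below -/
import Mathlib

section
/- Let X and Y be integrable real-valued random variables on a probability space with E[X] = E[Y]. Suppose a ≤ b are real numbers such that X ∈ [a,b] almost surely and Y ∈ {a,b} almost surely. Then for any convex function φ : [a,b] → ℝ, E[φ(X)] ≤ E[φ(Y)]. (Inverse Jensen inequality.) -/
/-!
The chord `L` of `φ` through `(a, φ a)` and `(b, φ b)` dominates `φ` on `[a, b]` and agrees with it
at the endpoints, so `E[φ(X)] ≤ E[L(X)] = L(E[X]) = L(E[Y]) = E[L(Y)] = E[φ(Y)]`.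

Since a Bochner integral is zero for a non-integrable function, the first step needs `φ(X)` to be
integrable. Measurability comes from the sublevel sets of `φ` being intervals
(`measurable_comp_projIcc`), and boundedness from `max (φ a) (φ b)` above and from convexity at the
midpoint below (`lower_bound`).
-/

open MeasureTheory

/-- Sublevel sets of a convex function are intervals, hence Borel. The function is extended by
clamping to `[a, b]`, since nothing is known about `φ` outside that interval. -/
lemma measurable_comp_projIcc {a b : ℝ} (hab : a ≤ b) {φ : ℝ → ℝ}
    (hφ : ConvexOn ℝ (Set.Icc a b) φ) :
    Measurable fun x : ℝ => φ (Set.projIcc a b hab x) := by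
  refine measurable_of_Iic fun c => ?_
  have hconn : ({x ∈ Set.Icc a b | φ x ≤ c}).OrdConnected := (hφ.convex_le c).ordConnected
  have hmono : Monotone fun x : ℝ => (Set.projIcc a b hab x : ℝ) :=
    fun x y h => Set.monotone_projIcc hab h
  have heq : (fun x : ℝ => φ (Set.projIcc a b hab x)) ⁻¹' Set.Iic c
      = (fun x : ℝ => (Set.projIcc a b hab x : ℝ)) ⁻¹' {x ∈ Set.Icc a b | φ x ≤ c} := by
    ext x
    exact ⟨fun h => ⟨(Set.projIcc a b hab x).2, h⟩, fun h => h.2⟩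
  rw [heq]
  exact (hconn.preimage_mono hmono).measurableSet

lemma upper_bound {a b x : ℝ} {φ : ℝ → ℝ} (hφ : ConvexOn ℝ (Set.Icc a b) φ)
    (hx : x ∈ Set.Icc a b) : φ x ≤ max (φ a) (φ b) :=
  hφ.le_max_of_mem_Icc (Set.left_mem_Icc.2 (hx.1.trans hx.2))
    (Set.right_mem_Icc.2 (hx.1.trans hx.2)) hx

/-- Compare `x` with its reflection `a + b - x`: the two average to the midpoint, and `φ` is bounded
above at the reflection. -/
lemma lower_bound {a b x : ℝ} {φ : ℝ → ℝ} (hφ : ConvexOn ℝ (Set.Icc a b) φ)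
    (hx : x ∈ Set.Icc a b) : 2 * φ ((a + b) / 2) - max (φ a) (φ b) ≤ φ x := by
  have hr : a + b - x ∈ Set.Icc a b := ⟨by linarith [hx.2], by linarith [hx.1]⟩
  have hu := upper_bound hφ hr
  have hc := hφ.2 hx hr (show (0 : ℝ) ≤ 1 / 2 by norm_num)
    (show (0 : ℝ) ≤ 1 / 2 by norm_num) (by norm_num)
  simp only [smul_eq_mul] at hc
  rw [show 1 / 2 * x + 1 / 2 * (a + b - x) = (a + b) / 2 by ring] at hc
  linarith

lemma le_chord {a b x : ℝ} {φ : ℝ → ℝ} (hφ : ConvexOn ℝ (Set.Icc a b) φ)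
    (hx : x ∈ Set.Icc a b) : φ x ≤ φ a + (φ b - φ a) / (b - a) * (x - a) := by
  have hab := hx.1.trans hx.2
  rcases hab.eq_or_lt with rfl | h
  · have : x = a := le_antisymm hx.2 hx.1
    simp [this]
  · have hpos : 0 < b - a := sub_pos.2 h
    have hc := hφ.2 (Set.left_mem_Icc.2 hab) (Set.right_mem_Icc.2 hab)
      (div_nonneg (sub_nonneg.2 hx.2) hpos.le) (div_nonneg (sub_nonneg.2 hx.1) hpos.le)
      (by field_simp; ring)
    simp only [smul_eq_mul] at hc
    rw [show (b - x) / (b - a) * a + (x - a) / (b - a) * b = x by field_simp; ring] at hc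
    refine hc.trans (le_of_eq ?_)
    field_simp
    ring

theorem stmt_7 {Ω : Type*} [MeasurableSpace Ω] (μ : Measure Ω) [IsProbabilityMeasure μ]
    (X Y : Ω → ℝ) (hXm : Measurable X) (hYm : Measurable Y)
    (hXi : Integrable X μ) (hYi : Integrable Y μ)
    (hmean : ∫ ω, X ω ∂μ = ∫ ω, Y ω ∂μ)
    (a b : ℝ) (hab : a ≤ b)
    (hXab : ∀ᵐ ω ∂μ, X ω ∈ Set.Icc a b)
    (hYab : ∀ᵐ ω ∂μ, Y ω ∈ ({a, b} : Set ℝ))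
    (φ : ℝ → ℝ) (hφ : ConvexOn ℝ (Set.Icc a b) φ) :
    ∫ ω, φ (X ω) ∂μ ≤ ∫ ω, φ (Y ω) ∂μ := by
  -- The chord's slope; for `a = b` it is `0 / 0 = 0`, which is still a valid choice.
  set s := (φ b - φ a) / (b - a) with hs
  have hchord : ∀ Z : Ω → ℝ, Integrable Z μ → Integrable (fun ω => φ a + s * (Z ω - a)) μ :=
    fun Z hZ => (integrable_const _).add ((hZ.sub (integrable_const _)).const_mul s)
  have hint : ∀ Z : Ω → ℝ, Integrable Z μ →
      ∫ ω, (φ a + s * (Z ω - a)) ∂μ = φ a + s * (∫ ω, Z ω ∂μ - a) := by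
    intro Z hZ
    have hsub : Integrable (fun ω => s * (Z ω - a)) μ :=
      (hZ.sub (integrable_const _)).const_mul s
    rw [integral_add (integrable_const _) hsub,
      integral_const_mul, integral_sub hZ (integrable_const _)]
    simp
  have hφX : Integrable (fun ω => φ (X ω)) μ := by
    refine Integrable.of_mem_Icc (2 * φ ((a + b) / 2) - max (φ a) (φ b)) (max (φ a) (φ b)) ?_ ?_
    · refine ((measurable_comp_projIcc hab hφ).comp hXm).aemeasurable.congr ?_
      filter_upwards [hXab] with ω hω
      simp [Set.projIcc_of_mem hab hω]
    · filter_upwards [hXab] with ω hω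
      exact ⟨lower_bound hφ hω, upper_bound hφ hω⟩
  calc ∫ ω, φ (X ω) ∂μ ≤ ∫ ω, (φ a + s * (X ω - a)) ∂μ := by
        refine integral_mono_ae hφX (hchord X hXi) ?_
        filter_upwards [hXab] with ω hω
        exact le_chord hφ hω
    _ = ∫ ω, (φ a + s * (Y ω - a)) ∂μ := by rw [hint X hXi, hint Y hYi, hmean]
    _ = ∫ ω, φ (Y ω) ∂μ := by
        refine integral_congr_ae ?_
        filter_upwards [hYab] with ω hω
        rcases hω with h | h
        · simp [h]
        · rw [Set.mem_singleton_iff] at h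
          rw [h, hs]
          rcases hab.eq_or_lt with rfl | hlt
          · simp
          · rw [div_mul_cancel₀ _ (sub_pos.2 hlt).ne']
            ring
end

section
/- Let 0 < β ≤ α be real numbers. Then the binary Rényi entropy of order β is concave relative to that of order α: there exists a function φ, concave and nondecreasing on the interval [0, log 2], such that h_β(p) = φ(h_α(p)) for all p ∈ (0,1). -/
/-!
By the symmetry `p ↔ 1 - p` it suffices to treat `p ∈ [0, 1/2]`, where each entropy `h_α` increases
continuously from `0` to `log 2`. By Cauchy's mean value theorem, `h_β ∘ h_α⁻¹` is concave as soon
as `h_β' / h_α'` is antitone in `p` (`exists_concave_of_hasDerivAt`).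

With `s = log ((1 - p) / p) / 2`, which decreases in `p`, the derivative is
`h_α'(p) = 2 * α * cosh s * (sinh ((α - 1) * s) / (α - 1)) / cosh (α * s)`, and the Shannon case is
the limit `α → 1`. So `h_β' / h_α'` has to be monotone in `s`. Taking the logarithmic
derivative, this says that `x tanh x - (x - s) coth (x - s)`, evaluated at `x = α * s`, is at least
its value at `x = β * s`. It follows from two facts:
* `x coth x` is convex on the whole line, so its increment from `β * s` to `α * s` is at least the
  increment of the same length shifted left by `s` (`xcoth_shift_le`);
* `x tanh x - x coth x` is monotone on `(0, ∞)` (`monotoneOn_xtanh_sub_xcoth`).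

Both rest on `sinh x ≤ x * cosh x` for `x ≥ 0`. Writing `sinh (a * s) / a = s * sinhc (a * s)` covers
the order `1` without a separate limit.
-/

/-- The binary Rényi entropy of order `α` (natural logarithm), with the
Shannon entropy at `α = 1`. -/
noncomputable def binaryRenyiEntropy (α p : ℝ) : ℝ :=
  if α = 1 then -(p * Real.log p) - (1 - p) * Real.log (1 - p)
  else (1 / (1 - α)) * Real.log (p ^ α + (1 - p) ^ α)

open Set Real

/-! ### Relative concavity from an antitone ratio of derivatives -/

/-- If `f` and `g` have positive derivatives whose ratio `f' / g'` is antitone, then `f` is a concave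
nondecreasing function of `g`, namely `f ∘ g⁻¹`. -/
theorem exists_concave_of_hasDerivAt {f g f' g' : ℝ → ℝ} {a b : ℝ} (hab : a ≤ b)
    (hf : ContinuousOn f (Icc a b)) (hg : ContinuousOn g (Icc a b))
    (hf' : ∀ x ∈ Ioo a b, HasDerivAt f (f' x) x)
    (hg' : ∀ x ∈ Ioo a b, HasDerivAt g (g' x) x)
    (hfpos : ∀ x ∈ Ioo a b, 0 < f' x) (hgpos : ∀ x ∈ Ioo a b, 0 < g' x)
    (hanti : ∀ c ∈ Ioo a b, ∀ d ∈ Ioo a b, c < d → f' d / g' d ≤ f' c / g' c) :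
    ∃ φ : ℝ → ℝ, ConcaveOn ℝ (Icc (g a) (g b)) φ ∧ MonotoneOn φ (Icc (g a) (g b)) ∧
      ∀ x ∈ Icc a b, f x = φ (g x) := by
  have mono : ∀ {k k' : ℝ → ℝ}, ContinuousOn k (Icc a b) →
      (∀ x ∈ Ioo a b, HasDerivAt k (k' x) x) → (∀ x ∈ Ioo a b, 0 < k' x) →
      StrictMonoOn k (Icc a b) := by
    intro k k' hk hk' hpos
    refine strictMonoOn_of_deriv_pos (convex_Icc a b) hk ?_
    intro x hx
    rw [interior_Icc] at hx
    rw [(hk' x hx).deriv]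
    exact hpos x hx
  have fm := mono hf hf' hfpos
  have gm := mono hg hg' hgpos
  have hsurj : SurjOn g (Icc a b) (Icc (g a) (g b)) := intermediate_value_Icc hab hg
  set ψ := Function.invFunOn g (Icc a b) with hψ
  have hψm : ∀ x ∈ Icc (g a) (g b), ψ x ∈ Icc a b := fun x hx =>
    Function.invFunOn_mem (hsurj hx)
  have hψe : ∀ x ∈ Icc (g a) (g b), g (ψ x) = x := fun x hx =>
    Function.invFunOn_eq (hsurj hx)
  have hψlt : ∀ x ∈ Icc (g a) (g b), ∀ y ∈ Icc (g a) (g b), x < y → ψ x < ψ y := by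
    intro x hx y hy hxy
    rw [← gm.lt_iff_lt (hψm x hx) (hψm y hy), hψe x hx, hψe y hy]
    exact hxy
  -- On each piece the slope of `f ∘ ψ` is a value of `f' / g'`, by Cauchy's mean value theorem.
  have slope : ∀ x ∈ Icc (g a) (g b), ∀ y ∈ Icc (g a) (g b), x < y →
      ∃ c ∈ Ioo (ψ x) (ψ y), c ∈ Ioo a b ∧ (f (ψ y) - f (ψ x)) / (y - x) = f' c / g' c := by
    intro x hx y hy hxy
    have h1 := hψm x hx
    have h2 := hψm y hy
    have hsub : Icc (ψ x) (ψ y) ⊆ Icc a b := Icc_subset_Icc h1.1 h2.2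
    have hsub' : Ioo (ψ x) (ψ y) ⊆ Ioo a b := Ioo_subset_Ioo h1.1 h2.2
    obtain ⟨c, hc, h⟩ := exists_ratio_hasDerivAt_eq_ratio_slope f f' (hψlt x hx y hy hxy)
      (hf.mono hsub) (fun z hz => hf' z (hsub' hz)) g g' (hg.mono hsub)
      (fun z hz => hg' z (hsub' hz))
    refine ⟨c, hc, hsub' hc, ?_⟩
    rw [hψe x hx, hψe y hy] at h
    rw [div_eq_div_iff (sub_pos.2 hxy).ne' (hgpos c (hsub' hc)).ne', ← h, mul_comm]
  refine ⟨fun x => f (ψ x), ?_, ?_, ?_⟩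
  · refine concaveOn_of_slope_anti_adjacent (convex_Icc _ _) ?_
    intro x y z hx hz hxy hyz
    have hy : y ∈ Icc (g a) (g b) := ⟨hx.1.trans hxy.le, hyz.le.trans hz.2⟩
    obtain ⟨c, hc, hc', h1⟩ := slope x hx y hy hxy
    obtain ⟨d, hd, hd', h2⟩ := slope y hy z hz hyz
    rw [h1, h2]
    exact hanti c hc' d hd' (hc.2.trans hd.1)
  · intro x hx y hy hxy
    rcases hxy.eq_or_lt with rfl | h
    · exact le_rfl
    · exact (fm (hψm x hx) (hψm y hy) (hψlt x hx y hy h)).le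
  · intro x hx
    have hgx : g x ∈ Icc (g a) (g b) :=
      ⟨gm.monotoneOn ⟨le_rfl, hab⟩ hx hx.1, gm.monotoneOn hx ⟨hab, le_rfl⟩ hx.2⟩
    have : ψ (g x) = x := gm.injOn (hψm _ hgx) hx (hψe _ hgx)
    simp only [this]

/-! ### The functions `sinh x / x` and `x coth x` -/

/-- `sinh x / x`, with the removable singularity at `0` filled in. -/
noncomputable def sinhc (x : ℝ) : ℝ := dslope sinh 0 x

theorem sinhc_zero : sinhc 0 = 1 := by
  simp [sinhc]

theorem sinhc_of_ne {x : ℝ} (hx : x ≠ 0) : sinhc x = sinh x / x := by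
  rw [sinhc, dslope_of_ne _ hx, slope_def_field]; simp

theorem sinhc_pos (x : ℝ) : 0 < sinhc x := by
  rcases lt_trichotomy x 0 with h | rfl | h
  · rw [sinhc_of_ne h.ne]; exact div_pos_of_neg_of_neg (sinh_neg_iff.2 h) h
  · simp [sinhc_zero]
  · rw [sinhc_of_ne h.ne']; exact div_pos (sinh_pos_iff.2 h) h

theorem sinhc_neg (x : ℝ) : sinhc (-x) = sinhc x := by
  by_cases h : x = 0
  · simp [h]
  · rw [sinhc_of_ne h, sinhc_of_ne (neg_ne_zero.2 h), sinh_neg, neg_div_neg_eq]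

theorem continuous_sinhc : Continuous sinhc := by
  have : ContinuousOn (dslope sinh 0) univ :=
    (continuousOn_dslope Filter.univ_mem).2
      ⟨continuous_sinh.continuousOn, differentiable_sinh 0⟩
  exact continuousOn_univ.1 this

/-- The even function `x * coth x`, with value `1` at `0`. -/
noncomputable def xcoth (x : ℝ) : ℝ := cosh x / sinhc x

theorem xcoth_zero : xcoth 0 = 1 := by simp [xcoth, sinhc_zero]

theorem xcoth_of_ne {x : ℝ} (hx : x ≠ 0) : xcoth x = x * cosh x / sinh x := by
  rw [xcoth, sinhc_of_ne hx, div_div_eq_mul_div, mul_comm]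

theorem xcoth_abs (x : ℝ) : xcoth |x| = xcoth x := by
  rcases abs_choice x with h | h <;> rw [h]
  rw [xcoth, xcoth, sinhc_neg, cosh_neg]

theorem continuous_xcoth : Continuous xcoth :=
  continuous_cosh.div continuous_sinhc fun x => (sinhc_pos x).ne'

theorem sinh_le_mul_cosh {x : ℝ} (hx : 0 ≤ x) : sinh x ≤ x * cosh x := by
  have hd : ∀ y, HasDerivAt (fun y => y * cosh y - sinh y) (y * sinh y) y := by
    intro y
    have := ((hasDerivAt_id' y).mul (hasDerivAt_cosh y)).sub (hasDerivAt_sinh y)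
    refine this.congr_deriv ?_
    ring
  have hm : MonotoneOn (fun y => y * cosh y - sinh y) (Ici 0) := by
    refine monotoneOn_of_deriv_nonneg (convex_Ici 0)
      (fun y _ => (hd y).continuousAt.continuousWithinAt)
      (fun y _ => (hd y).differentiableAt.differentiableWithinAt) ?_
    intro y hy
    rw [interior_Ici] at hy
    rw [(hd y).deriv]
    exact mul_nonneg hy.le (sinh_nonneg_iff.2 hy.le)
  have := hm self_mem_Ici hx hx
  simp at this
  linarith

theorem hasDerivAt_xcoth {x : ℝ} (hx : 0 < x) :
    HasDerivAt xcoth ((sinh x * cosh x - x) / sinh x ^ 2) x := by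
  have hs : sinh x ≠ 0 := (sinh_pos_iff.2 hx).ne'
  have h := ((hasDerivAt_id' x).mul (hasDerivAt_cosh x)).div (hasDerivAt_sinh x) hs
  have he : xcoth =ᶠ[nhds x] fun y => y * cosh y / sinh y := by
    filter_upwards [lt_mem_nhds hx] with y hy using xcoth_of_ne hy.ne'
  refine (h.congr_of_eventuallyEq he).congr_deriv ?_
  congr 1
  simp only [Pi.mul_apply]
  nlinarith [cosh_sq x]

theorem convexOn_xcoth_Ici : ConvexOn ℝ (Ici 0) xcoth := by
  refine convexOn_of_hasDerivWithinAt2_nonneg (convex_Ici 0) continuous_xcoth.continuousOn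
    (f' := fun x => (sinh x * cosh x - x) / sinh x ^ 2)
    (f'' := fun x => 2 * (x * cosh x - sinh x) / sinh x ^ 3) ?_ ?_ ?_ <;>
    rw [interior_Ici] <;> intro x hx <;> have hx : 0 < x := hx
  · exact (hasDerivAt_xcoth hx).hasDerivWithinAt
  · have hs : sinh x ≠ 0 := (sinh_pos_iff.2 hx).ne'
    have h := (((hasDerivAt_sinh x).mul (hasDerivAt_cosh x)).sub (hasDerivAt_id' x)).div
      ((hasDerivAt_sinh x).pow 2) (pow_ne_zero 2 hs)
    refine (h.congr_deriv ?_).hasDerivWithinAt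
    simp only [Pi.mul_apply, Pi.sub_apply, Pi.pow_apply]
    rw [div_eq_div_iff (by positivity) (by positivity)]
    push_cast
    have : sinh x ^ 2 = cosh x ^ 2 - 1 := sinh_sq x
    linear_combination (sinh x ^ 5 ) * this
  · exact div_nonneg (mul_nonneg zero_le_two (sub_nonneg.2 (sinh_le_mul_cosh hx.le)))
      (pow_nonneg (sinh_pos_iff.2 hx).le 3)

theorem monotoneOn_xcoth_Ici : MonotoneOn xcoth (Ici 0) := by
  refine monotoneOn_of_deriv_nonneg (convex_Ici 0) continuous_xcoth.continuousOn ?_ ?_ <;>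
    rw [interior_Ici] <;> intro x hx <;> have hx : 0 < x := hx
  · exact (hasDerivAt_xcoth hx).differentiableAt.differentiableWithinAt
  · rw [(hasDerivAt_xcoth hx).deriv]
    have h1 : x ≤ sinh x := self_le_sinh_iff.2 hx.le
    have h2 := one_le_cosh x
    refine div_nonneg ?_ (sq_nonneg _)
    nlinarith

/-- Convexity across `0`: `xcoth x = xcoth |x|`, a convex monotone function of the convex
function `|x|`. -/
theorem convexOn_xcoth : ConvexOn ℝ univ xcoth := by
  have himg : (fun x : ℝ => ‖x‖) '' univ ⊆ Ici 0 := by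
    rintro _ ⟨x, -, rfl⟩
    exact norm_nonneg x
  have h : ConvexOn ℝ univ (xcoth ∘ fun x : ℝ => ‖x‖) := by
    refine ConvexOn.comp (convexOn_xcoth_Ici.subset himg ?_) (convexOn_norm convex_univ)
      (monotoneOn_xcoth_Ici.mono himg)
    have : (fun x : ℝ => ‖x‖) '' univ = Ici 0 := by
      refine himg.antisymm fun y hy => ⟨y, mem_univ _, ?_⟩
      simpa using hy
    rw [this]
    exact convex_Ici 0
  have he : (xcoth ∘ fun x : ℝ => ‖x‖) = xcoth := by
    funext x
    exact xcoth_abs x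
  rwa [he] at h

theorem xcoth_shift_le {x y s : ℝ} (hxy : x ≤ y) (hs : 0 ≤ s) :
    xcoth (y - s) - xcoth (x - s) ≤ xcoth y - xcoth x := by
  rcases hxy.eq_or_lt with rfl | hxy
  · simp
  rcases hs.eq_or_lt with rfl | hs
  · simp
  have h := convexOn_xcoth.2
  have hne : y - x + s ≠ 0 := by linarith
  have hp : 0 < y - x + s := by linarith
  -- Both `x` and `y - s` lie between `x - s` and `y`, with complementary weights.
  have h1 := @h (x - s) trivial y trivial ((y - x) / (y - x + s)) (s / (y - x + s))
    (div_nonneg (by linarith) hp.le) (div_nonneg hs.le hp.le) (by field_simp)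
  have h2 := @h (x - s) trivial y trivial (s / (y - x + s)) ((y - x) / (y - x + s))
    (div_nonneg hs.le hp.le) (div_nonneg (by linarith) hp.le) (by field_simp; ring)
  simp only [smul_eq_mul] at h1 h2
  have e1 : (y - x) / (y - x + s) * (x - s) + s / (y - x + s) * y = x := by
    field_simp; ring
  have e2 : s / (y - x + s) * (x - s) + (y - x) / (y - x + s) * y = y - s := by
    field_simp; ring
  have e3 : (y - x) / (y - x + s) + s / (y - x + s) = 1 := by field_simp
  rw [e1] at h1
  rw [e2] at h2
  have e4 : s / (y - x + s) = 1 - (y - x) / (y - x + s) := by linarith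
  rw [e4] at h1 h2
  linarith

/-! ### Monotonicity of the ratio of derivatives -/

theorem monotoneOn_xtanh_sub_xcoth :
    MonotoneOn (fun x => x * sinh x / cosh x - xcoth x) (Ioi 0) := by
  have hd : ∀ x ∈ Ioi (0 : ℝ), HasDerivAt (fun x => x * sinh x / cosh x - xcoth x)
      ((2 * x * cosh (2 * x) - sinh (2 * x)) / (2 * sinh x ^ 2 * cosh x ^ 2)) x := by
    intro x hx
    have hs : sinh x ≠ 0 := (sinh_pos_iff.2 hx).ne'
    have hc : cosh x ≠ 0 := (cosh_pos x).ne'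
    have h := (((hasDerivAt_id' x).mul (hasDerivAt_sinh x)).div (hasDerivAt_cosh x) hc).sub
      (hasDerivAt_xcoth hx)
    refine h.congr_deriv ?_
    simp only [Pi.mul_apply]
    rw [cosh_two_mul, sinh_two_mul]
    field_simp
    have : sinh x ^ 2 = cosh x ^ 2 - 1 := sinh_sq x
    have e4 : sinh x ^ 4 = (cosh x ^ 2 - 1) ^ 2 := by rw [← this]; ring
    have e3 : sinh x ^ 3 = sinh x * (cosh x ^ 2 - 1) := by rw [← this]; ring
    ring_nf
    simp only [e4, e3, this]
    ring
  refine monotoneOn_of_deriv_nonneg (convex_Ioi 0)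
    (fun x hx => (hd x hx).continuousAt.continuousWithinAt) ?_ ?_ <;>
    rw [interior_Ioi] <;> intro x hx
  · exact (hd x hx).differentiableAt.differentiableWithinAt
  · rw [(hd x hx).deriv]
    have hx : 0 < x := hx
    refine div_nonneg (sub_nonneg.2 (sinh_le_mul_cosh (by linarith))) (by positivity)

theorem hasDerivAt_log_sinhc (a : ℝ) {s : ℝ} (hs : 0 < s) :
    HasDerivAt (fun s => log (sinhc (a * s))) ((xcoth (a * s) - 1) / s) s := by
  by_cases ha : a = 0
  · subst ha
    simpa [sinhc_zero, xcoth_zero] using hasDerivAt_const s (0 : ℝ)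
  have has : a * s ≠ 0 := mul_ne_zero ha hs.ne'
  have hsi : sinh (a * s) ≠ 0 := by simpa using has
  have he : (fun s => sinhc (a * s)) =ᶠ[nhds s] fun s => sinh (a * s) / (a * s) := by
    filter_upwards [lt_mem_nhds hs] with y hy using sinhc_of_ne (mul_ne_zero ha hy.ne')
  have hl : HasDerivAt (fun s => a * s) a s := by simpa using (hasDerivAt_id' s).const_mul a
  have h := (((hl.sinh).div hl has).congr_of_eventuallyEq he).log (sinhc_pos _).ne'
  refine h.congr_deriv ?_
  rw [xcoth_of_ne has, sinhc_of_ne has]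
  field_simp

theorem hasDerivAt_log_cosh (a : ℝ) {s : ℝ} (hs : 0 < s) :
    HasDerivAt (fun s => log (cosh (a * s)))
      (a * s * sinh (a * s) / cosh (a * s) / s) s := by
  have hl : HasDerivAt (fun s => a * s) a s := by simpa using (hasDerivAt_id' s).const_mul a
  refine (hl.cosh.log (cosh_pos _).ne').congr_deriv ?_
  field_simp

/-- The derivative of the entropy of order `α` at `p ∈ (0, 1/2)`, as a function of
`s = (log (1 - p) - log p) / 2`; see `hasDerivAt_binaryRenyiEntropy`. -/
noncomputable def slopeFn (α s : ℝ) : ℝ :=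
  2 * α * s * sinhc ((α - 1) * s) * cosh s / cosh (α * s)

theorem slopeFn_pos {α s : ℝ} (hα : 0 < α) (hs : 0 < s) : 0 < slopeFn α s := by
  have := sinhc_pos ((α - 1) * s)
  unfold slopeFn
  positivity

theorem slopeFn_ratio_mono {α β : ℝ} (hβ : 0 < β) (hβα : β ≤ α) {s t : ℝ} (hs : 0 < s)
    (hst : s ≤ t) : slopeFn β s / slopeFn α s ≤ slopeFn β t / slopeFn α t := by
  have hα : 0 < α := hβ.trans_le hβα
  -- `L` is the logarithm of the ratio, up to the constant `log (β / α)`.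
  set L : ℝ → ℝ := fun s => log (sinhc ((β - 1) * s)) - log (sinhc ((α - 1) * s)) +
    log (cosh (α * s)) - log (cosh (β * s)) with hL
  have hd : ∀ x ∈ Ioi (0 : ℝ), HasDerivAt L ((xcoth ((β - 1) * x) - 1) / x -
      (xcoth ((α - 1) * x) - 1) / x + α * x * sinh (α * x) / cosh (α * x) / x -
      β * x * sinh (β * x) / cosh (β * x) / x) x := fun x hx =>
    (((hasDerivAt_log_sinhc _ hx).sub (hasDerivAt_log_sinhc _ hx)).add
      (hasDerivAt_log_cosh _ hx)).sub (hasDerivAt_log_cosh _ hx)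
  have hmono : MonotoneOn L (Ioi 0) := by
    refine monotoneOn_of_deriv_nonneg (convex_Ioi 0)
      (fun x hx => (hd x hx).continuousAt.continuousWithinAt) ?_ ?_ <;>
      rw [interior_Ioi] <;> intro x hx
    · exact (hd x hx).differentiableAt.differentiableWithinAt
    · rw [(hd x hx).deriv]
      have hx : 0 < x := hx
      have hle : β * x ≤ α * x := mul_le_mul_of_nonneg_right hβα hx.le
      have h1 := xcoth_shift_le hle hx.le
      have h2 := monotoneOn_xtanh_sub_xcoth (mul_pos hβ hx : β * x ∈ Ioi 0)
        (mul_pos hα hx : α * x ∈ Ioi 0) hle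
      simp only at h2
      rw [← sub_div, ← add_div, ← sub_div]
      refine div_nonneg ?_ hx.le
      rw [sub_one_mul, sub_one_mul]
      linarith
  have key : ∀ x, 0 < x → slopeFn β x / slopeFn α x = β / α * exp (L x) := by
    intro x hx
    have h1 := sinhc_pos ((β - 1) * x)
    have h2 := sinhc_pos ((α - 1) * x)
    have h3 := cosh_pos (α * x)
    have h4 := cosh_pos (β * x)
    simp only [hL]
    rw [exp_sub, exp_add, exp_sub, exp_log h1, exp_log h2, exp_log h3, exp_log h4]
    unfold slopeFn
    have := cosh_pos x
    field_simp
  rw [key s hs, key t (hs.trans_le hst)]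
  exact mul_le_mul_of_nonneg_left (exp_le_exp.2 (hmono hs (hs.trans_le hst) hst))
    (div_pos hβ hα).le

/-! ### The binary Rényi entropy on `[0, 1/2]` -/

theorem hasDerivAt_binaryRenyiEntropy {α p : ℝ} (hα : 0 < α) (hp : 0 < p) (hp1 : p < 1 / 2) :
    HasDerivAt (binaryRenyiEntropy α) (slopeFn α ((log (1 - p) - log p) / 2)) p := by
  have hq : 0 < 1 - p := by linarith
  have hlin : HasDerivAt (fun p : ℝ => 1 - p) (-1) p := by
    simpa using (hasDerivAt_id' p).const_sub 1
  by_cases h1 : α = 1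
  · subst h1
    have he : binaryRenyiEntropy 1 = fun p => -(p * log p) - (1 - p) * log (1 - p) := by
      funext p; simp [binaryRenyiEntropy]
    rw [he]
    have h := (((hasDerivAt_id' p).mul (hasDerivAt_log hp.ne')).neg).sub
      (hlin.mul (hlin.log hq.ne'))
    refine h.congr_deriv ?_
    unfold slopeFn
    rw [sub_self, zero_mul, sinhc_zero, one_mul]
    have := cosh_pos ((log (1 - p) - log p) / 2)
    field_simp
    ring
  · have he : binaryRenyiEntropy α = fun p => 1 / (1 - α) * log (p ^ α + (1 - p) ^ α) := by
      funext p; simp [binaryRenyiEntropy, h1]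
    rw [he]
    have hpos : 0 < p ^ α + (1 - p) ^ α := add_pos (rpow_pos_of_pos hp _) (rpow_pos_of_pos hq _)
    have h := ((((hasDerivAt_id' p).rpow_const (p := α) (Or.inl hp.ne')).add
      (hlin.rpow_const (p := α) (Or.inl hq.ne'))).log hpos.ne').const_mul (1 / (1 - α))
    refine h.congr_deriv ?_
    -- Substitute `p = exp (m - s)` and `1 - p = exp (m + s)`.
    obtain ⟨m, hm⟩ : ∃ m, m = (log (1 - p) + log p) / 2 := ⟨_, rfl⟩
    obtain ⟨s, hs⟩ : ∃ s, s = (log (1 - p) - log p) / 2 := ⟨_, rfl⟩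
    have hs0 : 0 < s := by
      have := log_lt_log hp (by linarith : p < 1 - p)
      rw [hs]; linarith
    have lp : log p = m - s := by rw [hm, hs]; ring
    have lq : log (1 - p) = m + s := by rw [hm, hs]; ring
    have hc : 2 * exp m * cosh s = 1 := by
      have e1 : exp (m - s) = p := by rw [← lp, exp_log hp]
      have e2 : exp (m + s) = 1 - p := by rw [← lq, exp_log hq]
      rw [cosh_eq]
      rw [sub_eq_add_neg, exp_add] at e1
      rw [exp_add] at e2
      linarith
    have rp : ∀ a, p ^ a = exp (a * m) * exp (-(a * s)) := by
      intro a; rw [rpow_def_of_pos hp, lp, ← exp_add]; ring_nf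
    have rq : ∀ a, (1 - p) ^ a = exp (a * m) * exp (a * s) := by
      intro a; rw [rpow_def_of_pos hq, lq, ← exp_add]; ring_nf
    have hsum : p ^ α + (1 - p) ^ α = exp ((α - 1) * m) * (exp m * (2 * cosh (α * s))) := by
      have e : exp (α * m) = exp ((α - 1) * m) * exp m := by rw [← exp_add]; ring_nf
      rw [rp, rq, cosh_eq, e]
      ring
    have hdiff : p ^ (α - 1) - (1 - p) ^ (α - 1) =
        -(exp ((α - 1) * m) * (2 * sinh ((α - 1) * s))) := by
      rw [rp, rq, sinh_eq]; ring
    have ha : α - 1 ≠ 0 := sub_ne_zero.2 h1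
    have ha' : 1 - α ≠ 0 := sub_ne_zero.2 (Ne.symm h1)
    have hnum : 1 * α * p ^ (α - 1) + -1 * α * (1 - p) ^ (α - 1) =
        -(α * (exp ((α - 1) * m) * (2 * sinh ((α - 1) * s)))) := by
      linear_combination α * hdiff
    simp only [Pi.add_apply]
    rw [hnum, hsum, ← hs, slopeFn, sinhc_of_ne (mul_ne_zero ha hs0.ne')]
    have h2 := cosh_pos (α * s)
    have h3 := exp_pos m
    have h4 := exp_pos ((α - 1) * m)
    have : cosh s = 1 / (2 * exp m) := by field_simp; linarith
    rw [this]
    field_simp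
    ring

theorem continuousOn_binaryRenyiEntropy {α : ℝ} (hα : 0 < α) :
    ContinuousOn (binaryRenyiEntropy α) (Icc 0 (1 / 2)) := by
  by_cases h1 : α = 1
  · subst h1
    have he : binaryRenyiEntropy 1 = fun p => negMulLog p + negMulLog (1 - p) := by
      funext p; simp [binaryRenyiEntropy, negMulLog]; ring
    rw [he]
    exact (continuous_negMulLog.add
      (continuous_negMulLog.comp (continuous_const.sub continuous_id))).continuousOn
  · have he : binaryRenyiEntropy α = fun p => 1 / (1 - α) * log (p ^ α + (1 - p) ^ α) := by
      funext p; simp [binaryRenyiEntropy, h1]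
    rw [he]
    refine continuousOn_const.mul (ContinuousOn.log ?_ ?_)
    · exact ((continuous_rpow_const hα.le).add
        ((continuous_rpow_const hα.le).comp (continuous_const.sub continuous_id))).continuousOn
    · intro p hp
      have h2 : 0 ≤ p ^ α := rpow_nonneg hp.1 _
      have h3 : 0 < (1 - p) ^ α := rpow_pos_of_pos (by linarith [hp.2]) _
      positivity

theorem binaryRenyiEntropy_zero {α : ℝ} (hα : 0 < α) : binaryRenyiEntropy α 0 = 0 := by
  unfold binaryRenyiEntropy
  split_ifs <;> simp [zero_rpow hα.ne']

theorem binaryRenyiEntropy_half {α : ℝ} : binaryRenyiEntropy α (1 / 2) = log 2 := by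
  unfold binaryRenyiEntropy
  split_ifs with h
  · have : log (1 / 2) = -log 2 := by rw [one_div, log_inv]
    norm_num
    linarith
  · have h' : 1 - α ≠ 0 := sub_ne_zero.2 (Ne.symm h)
    have : (1 / 2 : ℝ) ^ α + (1 - 1 / 2) ^ α = 2 ^ (1 - α) := by
      rw [sub_half, rpow_sub two_pos, rpow_one, one_div, inv_rpow zero_le_two]
      ring
    rw [this, log_rpow two_pos]
    field_simp

theorem binaryRenyiEntropy_one_sub (α p : ℝ) :
    binaryRenyiEntropy α (1 - p) = binaryRenyiEntropy α p := by
  unfold binaryRenyiEntropy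
  rw [sub_sub_cancel]
  split_ifs
  · ring
  · rw [add_comm]

theorem stmt_10 (α β : ℝ) (hβ : 0 < β) (hβα : β ≤ α) :
    ∃ φ : ℝ → ℝ,
      ConcaveOn ℝ (Set.Icc 0 (Real.log 2)) φ ∧
      MonotoneOn φ (Set.Icc 0 (Real.log 2)) ∧
      ∀ p ∈ Set.Ioo (0 : ℝ) 1, binaryRenyiEntropy β p = φ (binaryRenyiEntropy α p) := by
  have hα : 0 < α := hβ.trans_le hβα
  have hpos : ∀ x ∈ Ioo (0 : ℝ) (1 / 2), 0 < (log (1 - x) - log x) / 2 := by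
    intro x hx
    have := log_lt_log hx.1 (by linarith [hx.2] : x < 1 - x)
    linarith
  obtain ⟨φ, h1, h2, h3⟩ := exists_concave_of_hasDerivAt (a := 0) (b := 1 / 2) (by norm_num)
    (continuousOn_binaryRenyiEntropy hβ) (continuousOn_binaryRenyiEntropy hα)
    (fun x hx => hasDerivAt_binaryRenyiEntropy hβ hx.1 hx.2)
    (fun x hx => hasDerivAt_binaryRenyiEntropy hα hx.1 hx.2)
    (fun x hx => slopeFn_pos hβ (hpos x hx)) (fun x hx => slopeFn_pos hα (hpos x hx))
    (fun c hc d hd hcd => slopeFn_ratio_mono hβ hβα (hpos d hd) (by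
      have e1 := log_lt_log hc.1 hcd
      have e2 := log_lt_log (by linarith [hd.2] : 0 < 1 - d) (by linarith : 1 - d < 1 - c)
      linarith))
  rw [binaryRenyiEntropy_zero hα, binaryRenyiEntropy_half] at h1 h2
  refine ⟨φ, h1, h2, fun p hp => ?_⟩
  rcases le_total p (1 / 2) with h | h
  · exact h3 p ⟨hp.1.le, h⟩
  · rw [← binaryRenyiEntropy_one_sub β, ← binaryRenyiEntropy_one_sub α]
    exact h3 (1 - p) ⟨by linarith [hp.2], by linarith⟩
end

section
/- For every integer k ≥ 3 and every real α > 0, the polynomial P_k(α) = k(α−1)(2α)^{k−1} + kα(2α−1)^{k−1} − (2α)^k − (2α−1)^k + (α+1)^k − (α−1)^k − 2kα^{k−1} + kα + 1 is nonnegative: P_k(α) ≥ 0. -/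
/-!
The polynomial has a double root at `α = 1`, and on each side of it splits into binomial-type
expressions that are nonnegative term by term.

For `α ≤ 1` put `b = 1 - α ≥ 0`, so that `α + 1 = 2α + b`, `1 = α + b` and `2α - 1 = α - b`.
Then `(2α + b)^k - (2α)^k - k b (2α)^(k-1) ≥ b^k ≥ (α - 1)^k` (`add_pow_ge`), and the remaining
terms are bounded below by
`(α + b)^k - (α - b)^k ≥ 2 k α^(k-1) b` and `(α + b)^(k-1) + (α - b)^(k-1) ≥ 2 α^(k-1)`
(`sum_diff_pow_ge`), whose combination uses `α + b = 1`.

For `α ≥ 1` put `s = α - 1 ≥ 0`. The terms `k s (2α)^(k-1) - (2α)^k + (2α - s)^k` are at least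
`s^k = (α - 1)^k` (`sub_pow_ge`), and the other terms are nonnegative by `trapezoid_nonneg`.
The auxiliary inequalities are proved by induction on the exponent.
-/

/-- Sums and differences of powers dominate the lowest terms of their binomial expansions, also
when `a - b` is negative. The two bounds are proved together because each feeds the other's
induction step. -/
lemma sum_diff_pow_ge (a b : ℝ) (ha : 0 ≤ a) (hb : 0 ≤ b) (n : ℕ) :
    2 * a ^ (n + 1) ≤ (a + b) ^ (n + 1) + (a - b) ^ (n + 1) ∧
      2 * ((n : ℝ) + 1) * a ^ n * b ≤ (a + b) ^ (n + 1) - (a - b) ^ (n + 1) := by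
  induction n with
  | zero => constructor <;> norm_num <;> linarith
  | succ n ih =>
    obtain ⟨h1, h2⟩ := ih
    have h0 : 0 ≤ 2 * ((n : ℝ) + 1) * a ^ n * b := by positivity
    have e1 := mul_le_mul_of_nonneg_left h1 ha
    have e2 := mul_le_mul_of_nonneg_left h1 hb
    have e3 := mul_le_mul_of_nonneg_left h2 ha
    have e4 := mul_nonneg hb (h0.trans h2)
    push_cast
    constructor
    · linear_combination e1 + e4
    · linear_combination e3 + e2

lemma add_pow_ge (u b : ℝ) (hu : 0 ≤ u) (hb : 0 ≤ b) (n : ℕ) :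
    u ^ (n + 2) + ((n : ℝ) + 2) * b * u ^ (n + 1) + b ^ (n + 2) ≤ (u + b) ^ (n + 2) := by
  induction n with
  | zero => norm_num; linarith [add_sq u b]
  | succ n ih =>
    have e1 := mul_le_mul_of_nonneg_left ih (add_nonneg hu hb)
    have e2 : 0 ≤ ((n : ℝ) + 2) * b ^ 2 * u ^ (n + 1) + b ^ (n + 2) * u := by positivity
    push_cast
    linear_combination e1 + e2

lemma sub_pow_ge (y s : ℝ) (hs : 0 ≤ s) (hy : 2 * s ≤ y) (n : ℕ) :
    y ^ (n + 2) - ((n : ℝ) + 2) * s * y ^ (n + 1) + s ^ (n + 2) ≤ (y - s) ^ (n + 2) := by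
  have hy0 : 0 ≤ y := by linarith
  induction n with
  | zero => norm_num; linarith [sub_sq y s]
  | succ n ih =>
    have e1 := mul_le_mul_of_nonneg_left ih (show 0 ≤ y - s by linarith)
    have e2 : 0 ≤ ((n : ℝ) + 2) * s ^ 2 * y ^ (n + 1) := by positivity
    have e3 : 0 ≤ s ^ (n + 2) * (y - 2 * s) :=
      mul_nonneg (by positivity) (by linarith)
    push_cast
    linear_combination e1 + e2 + e3

/-- A refinement of the convexity bound `(2a - 1)^(k-1) + 1 ≥ 2 a^(k-1)`, with `k = n + 2`. Writing
`B k` for the right-hand side, `B (k + 1) - (2a - 1) * B k` is a sum of nonnegative terms. -/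
lemma trapezoid_nonneg (a : ℝ) (ha : 1 ≤ a) (n : ℕ) :
    0 ≤ ((n : ℝ) + 2) * a * ((2 * a - 1) ^ (n + 1) + 1) - (2 * a - 1) ^ (n + 2) + 1
      - 2 * ((n : ℝ) + 2) * a ^ (n + 1) := by
  have ha0 : 0 ≤ a := by linarith
  have hs : 0 ≤ a - 1 := by linarith
  induction n with
  | zero => norm_num; nlinarith
  | succ n ih =>
    have e1 := mul_nonneg (show 0 ≤ 2 * a - 1 by linarith) ih
    have c := (sum_diff_pow_ge a (a - 1) ha0 hs (n + 1)).1
    rw [show a + (a - 1) = 2 * a - 1 by ring, show a - (a - 1) = 1 by ring, one_pow] at c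
    have e2 := mul_le_mul_of_nonneg_left c ha0
    have p1 : 0 ≤ a ^ (n + 2) - 1 := by linarith [one_le_pow₀ ha (n := n + 2)]
    have p2 : 0 ≤ a ^ n - 1 := by linarith [one_le_pow₀ ha (n := n)]
    have e3 := mul_nonneg hs p1
    have e4 : 0 ≤ 2 * ((n : ℝ) + 2) * (a - 1) * a * (a ^ n - 1) := by positivity
    push_cast
    linear_combination e1 + e2 + 2 * e3 + e4

theorem stmt_13 (k : ℕ) (hk : 3 ≤ k) (α : ℝ) (hα : 0 < α) :
    0 ≤ (k : ℝ) * (α - 1) * (2 * α) ^ (k - 1) + (k : ℝ) * α * (2 * α - 1) ^ (k - 1)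
        - (2 * α) ^ k - (2 * α - 1) ^ k + (α + 1) ^ k - (α - 1) ^ k
        - 2 * (k : ℝ) * α ^ (k - 1) + (k : ℝ) * α + 1 := by
  obtain ⟨n, rfl⟩ : ∃ n, k = n + 2 := ⟨k - 2, by omega⟩
  rw [show n + 2 - 1 = n + 1 by omega]
  push_cast
  rcases le_total 1 α with h | h
  · have h1 := sub_pow_ge (2 * α) (α - 1) (by linarith) (by linarith) n
    rw [show 2 * α - (α - 1) = α + 1 by ring] at h1
    have h2 := trapezoid_nonneg α h n
    linear_combination h1 + h2
  · have hb : 0 ≤ 1 - α := by linarith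
    have h1 := add_pow_ge (2 * α) (1 - α) (by linarith) hb n
    rw [show 2 * α + (1 - α) = α + 1 by ring] at h1
    have h2 : (α - 1) ^ (n + 2) ≤ (1 - α) ^ (n + 2) := by
      refine (le_abs_self _).trans_eq ?_
      rw [abs_pow, abs_sub_comm, abs_of_nonneg hb]
    have h3 := (sum_diff_pow_ge α (1 - α) hα.le hb n).1
    have h4 := (sum_diff_pow_ge α (1 - α) hα.le hb (n + 1)).2
    rw [show α + (1 - α) = 1 by ring, show α - (1 - α) = 2 * α - 1 by ring, one_pow] at h3 h4
    have h5 := mul_le_mul_of_nonneg_left h3 (show 0 ≤ ((n : ℝ) + 2) * α by positivity)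
    push_cast at h4
    linear_combination h1 + h2 + h4 + h5
end

section
/- For all real α > 0 and all real t ≥ 0, Φ_α(t) ≥ 0, where Φ_α(t) = ((α−1)t − 1)·exp(2αt) + (αt − 1)·exp((2α−1)t) + exp((α+1)t) − 2t·exp(αt) − exp((α−1)t) + (αt + 1)·exp(t) + ((α−1)t + 1). -/
/-!
With `a = α t ≥ 0` and `d = a - t ≤ a`, the expression equals `2 e^a G(a, d)`, where
`G(a, d) = (sinh a + a)(cosh d - 1) - (cosh a + 1)(sinh d - d)`.

For `d ≤ 0` both terms of `G` are nonnegative, since `sinh d ≤ d`. For `0 ≤ d ≤ a` one has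
`G(a, 0) = 0`, and `G` is nondecreasing in `d`: by the addition formula for `cosh a`, with
`e = a - d`,
`∂G/∂d = (cosh d - 1)(cosh e - 1) + sinh d sinh e + a sinh d ≥ 0`.
-/

open Real

/-- The case `0 ≤ d ≤ a`, by monotonicity in `d`. -/
lemma kernel_nonneg_of_nonneg (a d : ℝ) (hd : 0 ≤ d) (hda : d ≤ a) :
    0 ≤ (sinh a + a) * (cosh d - 1) - (cosh a + 1) * (sinh d - d) := by
  have hder : ∀ x : ℝ, HasDerivAt
      (fun d => (sinh a + a) * (cosh d - 1) - (cosh a + 1) * (sinh d - d))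
      ((sinh a + a) * sinh x - (cosh a + 1) * (cosh x - 1)) x := fun x =>
    (((hasDerivAt_cosh x).sub_const 1).const_mul (sinh a + a)).sub
      (((hasDerivAt_sinh x).sub (hasDerivAt_id x)).const_mul (cosh a + 1))
  have hmono : MonotoneOn
      (fun d => (sinh a + a) * (cosh d - 1) - (cosh a + 1) * (sinh d - d)) (Set.Icc 0 a) := by
    apply monotoneOn_of_deriv_nonneg (convex_Icc 0 a)
    · exact fun x _ => (hder x).continuousAt.continuousWithinAt
    · exact fun x _ => (hder x).differentiableAt.differentiableWithinAt
    · intro x hx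
      rw [interior_Icc] at hx
      obtain ⟨hx0, hxa⟩ := hx
      rw [(hder x).deriv]
      have hs : 0 ≤ sinh x := sinh_nonneg_iff.2 hx0.le
      have hse : 0 ≤ sinh (a - x) := sinh_nonneg_iff.2 (by linarith)
      have hc := one_le_cosh x
      have hce := one_le_cosh (a - x)
      have hadd : cosh a = cosh x * cosh (a - x) + sinh x * sinh (a - x) := by
        rw [← cosh_add]; ring_nf
      have hsub : cosh (a - x) = cosh a * cosh x - sinh a * sinh x := cosh_sub a x
      have h1 := mul_nonneg (sub_nonneg.2 hc) (sub_nonneg.2 hce)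
      have h2 := mul_nonneg hs hse
      have h3 : 0 ≤ a * sinh x := mul_nonneg (by linarith) hs
      linarith
  have h := hmono (Set.left_mem_Icc.2 (hd.trans hda)) ⟨hd, hda⟩ hd
  simpa using h

lemma kernel_nonneg (a d : ℝ) (ha : 0 ≤ a) (hda : d ≤ a) :
    0 ≤ (sinh a + a) * (cosh d - 1) - (cosh a + 1) * (sinh d - d) := by
  rcases le_total 0 d with hd | hd
  · exact kernel_nonneg_of_nonneg a d hd hda
  · have h1 : sinh d ≤ d := sinh_le_self_iff.2 hd
    have h2 := mul_nonneg (add_nonneg (sinh_nonneg_iff.2 ha) ha) (sub_nonneg.2 (one_le_cosh d))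
    have h3 : 0 ≤ (cosh a + 1) * (d - sinh d) :=
      mul_nonneg (by linarith [one_le_cosh a]) (by linarith)
    linarith

theorem stmt_14 (α t : ℝ) (hα : 0 < α) (ht : 0 ≤ t) :
    0 ≤ ((α - 1) * t - 1) * Real.exp (2 * α * t)
        + (α * t - 1) * Real.exp ((2 * α - 1) * t)
        + Real.exp ((α + 1) * t)
        - 2 * t * Real.exp (α * t)
        - Real.exp ((α - 1) * t)
        + (α * t + 1) * Real.exp t
        + ((α - 1) * t + 1) := by
  have h := kernel_nonneg (α * t) (α * t - t) (by positivity) (by linarith)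
  have h2 := mul_nonneg (mul_nonneg zero_le_two (exp_pos (α * t)).le) h
  refine h2.trans_eq ?_
  -- Every exponential is a monomial in `e^{αt}`, `e^t` and `(e^t)⁻¹`.
  have e1 : exp (2 * α * t) = exp (α * t) ^ 2 := by rw [← exp_nat_mul]; push_cast; ring_nf
  have e2 : exp ((2 * α - 1) * t) = exp (α * t) ^ 2 / exp t := by
    rw [← e1, ← exp_sub]; ring_nf
  have e3 : exp ((α + 1) * t) = exp (α * t) * exp t := by rw [← exp_add]; ring_nf
  have e4 : exp ((α - 1) * t) = exp (α * t) / exp t := by rw [← exp_sub]; ring_nf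
  have hA := (exp_pos (α * t)).ne'
  have hT := (exp_pos t).ne'
  simp only [sinh_eq, cosh_eq, e1, e2, e3, e4, exp_neg, exp_sub]
  field_simp
  ring
end

section
/- For every integer k ≥ 1 and every real α with 0 ≤ α ≤ 1, 2k(1−α)·α^{k−1} + (2α−1)^k ≤ 1. -/
/-!
With `b = 1 - α` one has `1 = (α + b) ^ k` and `2 * α - 1 = α - b`, so the claim says that
`(α + b) ^ k - (α - b) ^ k`, which is twice the sum of the terms of odd degree in `b` of the
binomial expansion, is at least its term of degree one, `2 * k * b * α ^ (k - 1)`.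
-/

/-- Twice the odd (resp. even) part in `b` of `(a + b) ^ (n + 1)` dominates its lowest-degree term.
The two bounds are proved together because multiplying by `a ± b` mixes the two parts. -/
lemma odd_even_part_lower_bound (a b : ℝ) (ha : 0 ≤ a) (hb : 0 ≤ b) (n : ℕ) :
    2 * ((n : ℝ) + 1) * b * a ^ n ≤ (a + b) ^ (n + 1) - (a - b) ^ (n + 1) ∧
      2 * a ^ (n + 1) ≤ (a + b) ^ (n + 1) + (a - b) ^ (n + 1) := by
  induction n with
  | zero => constructor <;> norm_num <;> linarith
  | succ n ih =>
    obtain ⟨hodd, heven⟩ := ih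
    have hpos : 0 ≤ (a + b) ^ (n + 1) - (a - b) ^ (n + 1) := le_trans (by positivity) hodd
    have h1 := mul_le_mul_of_nonneg_left hodd ha
    have h2 := mul_le_mul_of_nonneg_left heven hb
    have h3 := mul_le_mul_of_nonneg_left heven ha
    have h4 := mul_nonneg hb hpos
    rw [pow_succ (a + b) (n + 1), pow_succ (a - b) (n + 1), pow_succ a (n + 1)]
    generalize (a + b) ^ (n + 1) = x at *
    generalize (a - b) ^ (n + 1) = y at *
    rw [pow_succ a n] at *
    push_cast
    constructor <;> linarith

theorem stmt_16 (k : ℕ) (hk : 1 ≤ k) (α : ℝ) (hα : α ∈ Set.Icc (0 : ℝ) 1) :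
    2 * (k : ℝ) * (1 - α) * α ^ (k - 1) + (2 * α - 1) ^ k ≤ 1 := by
  obtain ⟨n, rfl⟩ := Nat.exists_eq_add_of_le' hk
  have h := (odd_even_part_lower_bound α (1 - α) hα.1 (sub_nonneg.2 hα.2) n).1
  rw [show α + (1 - α) = 1 by ring, show α - (1 - α) = 2 * α - 1 by ring, one_pow] at h
  rw [Nat.add_sub_cancel]
  push_cast
  linarith
end

section
/- Let s₀ ≤ s₁ and ℓ be real numbers, let π ∈ (0,1), set λ₀ = (s₀+ℓ)², λ₁ = (s₁+ℓ)², and λ̄ = π·λ₀ + (1−π)·λ₁, and assume λ̄ > 0. Let p₁ = π·λ₀/λ̄. Then λ̄ · (√((1−π)·p₁) − √(π·(1−p₁)))² ≤ π(1−π)·(s₁ − s₀)², with equality if and only if (s₀+ℓ)(s₁+ℓ) ≥ 0 (i.e. ℓ lies outside the open interval (−s₁, −s₀)). (Infinitesimal Bhattacharyya improvement bound for the Dolinar receiver: δb ≤ b(π)(s₁−s₀)².) -/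
/-!
Write `a = s₀ + l` and `b = s₁ + l`. The radicands are `c * a ^ 2` and `c * b ^ 2` with
`c = π (1 - π) / lam`, so the left-hand side equals `π (1 - π) (|a| - |b|) ^ 2`. Since
`(b - a) ^ 2 - (|a| - |b|) ^ 2 = 2 (|a b| - a b)`, the bound is `a b ≤ |a b|`, with equality
exactly when `0 ≤ a b`.
-/

theorem stmt_18 (s₀ s₁ l : ℝ) (hs : s₀ ≤ s₁) (π : ℝ) (hπ : π ∈ Set.Ioo (0 : ℝ) 1)
    (lam₀ lam₁ lam p₁ : ℝ)
    (h₀ : lam₀ = (s₀ + l) ^ 2) (h₁ : lam₁ = (s₁ + l) ^ 2)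
    (hlam : lam = π * lam₀ + (1 - π) * lam₁) (hlampos : 0 < lam)
    (hp₁ : p₁ = π * lam₀ / lam) :
    lam * (Real.sqrt ((1 - π) * p₁) - Real.sqrt (π * (1 - p₁))) ^ 2
        ≤ π * (1 - π) * (s₁ - s₀) ^ 2 ∧
    (lam * (Real.sqrt ((1 - π) * p₁) - Real.sqrt (π * (1 - p₁))) ^ 2
        = π * (1 - π) * (s₁ - s₀) ^ 2 ↔ 0 ≤ (s₀ + l) * (s₁ + l)) := by
  obtain ⟨hpos, hlt⟩ := hπ
  have hq : 0 < 1 - π := sub_pos.mpr hlt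
  -- Both radicands are squares times the common factor `π (1 - π) / lam`.
  have e₀ : (1 - π) * p₁ = π * (1 - π) / lam * (s₀ + l) ^ 2 := by
    rw [hp₁, h₀]; ring
  have e₁ : π * (1 - p₁) = π * (1 - π) / lam * (s₁ + l) ^ 2 := by
    have h : 1 - p₁ = (1 - π) * lam₁ / lam := by
      rw [hp₁, eq_div_iff hlampos.ne', sub_mul, div_mul_cancel₀ _ hlampos.ne']
      linarith
    rw [h, h₁]; ring
  have hc : 0 ≤ π * (1 - π) / lam := by positivity
  have key : lam * (Real.sqrt ((1 - π) * p₁) - Real.sqrt (π * (1 - p₁))) ^ 2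
      = π * (1 - π) * (|s₀ + l| - |s₁ + l|) ^ 2 := by
    rw [e₀, e₁, Real.sqrt_mul hc, Real.sqrt_mul hc, Real.sqrt_sq_eq_abs,
      Real.sqrt_sq_eq_abs, ← mul_sub, mul_pow, Real.sq_sqrt hc, ← mul_assoc,
      mul_div_cancel₀ _ hlampos.ne']
  have gap : (s₁ - s₀) ^ 2 - (|s₀ + l| - |s₁ + l|) ^ 2
      = 2 * (|(s₀ + l) * (s₁ + l)| - (s₀ + l) * (s₁ + l)) := by
    rw [abs_mul]
    linear_combination -sq_abs (s₀ + l) - sq_abs (s₁ + l)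
  have hw : 0 < π * (1 - π) := mul_pos hpos hq
  rw [key]
  constructor
  · apply mul_le_mul_of_nonneg_left _ hw.le
    linarith [le_abs_self ((s₀ + l) * (s₁ + l))]
  · rw [mul_right_inj' hw.ne', ← abs_eq_self]
    constructor <;> intro h <;> linarith
end
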